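/- Conversely, if a C¹ map u : B → ℝ³ on a bounded open set B ⊆ ℝ³ with det Du > 0 everywhere satisfies ∫_B f(x, u(x)) det Du(x) dx ≤ ∫_{ℝ³} sup_{x∈B} f(x,z) dz for all non-negative f ∈ C_c^∞(B × ℝ³), then for a.e. z ∈ ℝ³ the number of preimages #{x ∈ B : u(x) = z} is at most 1; i.e., u is a.e. injective. -/

import Mathlib

/-!
The hypothesis forces `u` to be injective on all of `B`. Suppose `u x₁ = u x₂ = z₀` with `x₁ ≠ x₂`.
Since `det Du > 0`, the inverse function theorem gives disjoint closed balls `K₁`, `K₂` around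
`x₁`, `x₂` on which `u` is injective and whose images contain a common ball around `z₀`. Test the
inequality with `f (x, z) = φ x * ψ z`, where `0 ≤ φ ≤ 1`, `φ = 1` on `K₁ ∪ K₂`, and `ψ` is a bump
function supported in that common ball. By the change of variables formula on each `Kᵢ`
(`setIntegral_comp_mul_det`) the left side is at least `2 * ∫ ψ`, while the right side is at
most `∫ ψ`; but `∫ ψ > 0`.
-/

/- STATEMENT 5: Converse of the global invertibility condition: if a `C¹` map
`u : B → ℝ³` on bounded open `B ⊆ ℝ³` with `det Du > 0` everywhere on `B` satisfies
`∫_B f(x,u(x)) det Du(x) dx ≤ ∫_{ℝ³} sup_{x∈B} f(x,z) dz` for all non-negative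
`f ∈ C_c^∞(B × ℝ³)`, then for a.e. `z ∈ ℝ³` the set of preimages
`{x ∈ B : u(x) = z}` has at most one element, i.e. `u` is a.e. injective. -/

noncomputable section
open MeasureTheory

abbrev E3 := EuclideanSpace ℝ (Fin 3)

/-- The gradient matrix `Du(x)` of `u` at `x`. -/
def Dmat (u : E3 → E3) (x : E3) : Matrix (Fin 3) (Fin 3) ℝ :=
  Matrix.of fun i j => fderiv ℝ u x (EuclideanSpace.single j 1) i

lemma Dmat_det (u : E3 → E3) (x : E3) : (Dmat u x).det = (fderiv ℝ u x).det := by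
  rw [ContinuousLinearMap.det,
    ← LinearMap.det_toMatrix (EuclideanSpace.basisFun (Fin 3) ℝ).toBasis]
  congr 1

lemma continuousOn_Dmat_det {B : Set E3} (hB : IsOpen B) {u : E3 → E3}
    (hu : ContDiffOn ℝ 1 u B) : ContinuousOn (fun x => (Dmat u x).det) B := by
  simp only [Dmat_det]
  exact ContinuousLinearMap.continuous_det.comp_continuousOn
    (hu.continuousOn_fderiv_of_isOpen hB le_rfl)

/-- The inverse function theorem at `x`: `u` is injective near `x` and is open at `x`. -/
lemma local_inverse {B : Set E3} (hB : IsOpen B) {u : E3 → E3} (hu : ContDiffOn ℝ 1 u B)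
    {x : E3} (hx : x ∈ B) (hdet : 0 < (Dmat u x).det) :
    (∃ U ∈ nhds x, Set.InjOn u U) ∧ Filter.map u (nhds x) = nhds (u x) := by
  rw [Dmat_det] at hdet
  have hs : HasStrictFDerivAt u (fderiv ℝ u x) x :=
    (hu.contDiffAt (hB.mem_nhds hx)).hasStrictFDerivAt one_ne_zero
  have hs' : HasStrictFDerivAt u
      (((fderiv ℝ u x).toContinuousLinearEquivOfDetNeZero hdet.ne' : E3 ≃L[ℝ] E3) :
        E3 →L[ℝ] E3) x := by
    simpa using hs
  refine ⟨⟨_, (hs'.toOpenPartialHomeomorph u).open_source.mem_nhds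
    hs'.mem_toOpenPartialHomeomorph_source, ?_⟩, hs'.map_nhds_eq_of_equiv⟩
  exact (hs'.toOpenPartialHomeomorph u).injOn

/-- Change of variables on a set where `u` is injective, for `ψ` supported in the image. -/
lemma setIntegral_comp_mul_det {u : E3 → E3} {K : Set E3} (hK : MeasurableSet K)
    (hd : ∀ x ∈ K, DifferentiableAt ℝ u x) (hdet : ∀ x ∈ K, 0 < (Dmat u x).det)
    (hinj : Set.InjOn u K) {ψ : E3 → ℝ} (hψ : Function.support ψ ⊆ u '' K) :
    ∫ x in K, ψ (u x) * (Dmat u x).det = ∫ z, ψ z := by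
  rw [← setIntegral_eq_integral_of_forall_compl_eq_zero (s := u '' K)
      (fun z hz => by_contra fun h => hz (hψ h)),
    integral_image_eq_integral_abs_det_fderiv_smul volume hK
      (fun x hx => (hd x hx).hasFDerivAt.hasFDerivWithinAt) hinj]
  refine setIntegral_congr_fun hK fun x hx => ?_
  have := hdet x hx
  rw [Dmat_det] at this
  simp only [Dmat_det, abs_of_pos this, smul_eq_mul, mul_comm]

theorem global_invertibility_implies_ae_injective
    (B : Set E3) (hB : IsOpen B) (hBbd : Bornology.IsBounded B)
    (u : E3 → E3) (hu : ContDiffOn ℝ 1 u B)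
    (hdiff : ∀ x ∈ B, DifferentiableAt ℝ u x)
    (hdet : ∀ x ∈ B, 0 < (Dmat u x).det)
    (hGMS : ∀ f : E3 × E3 → ℝ, ContDiff ℝ (⊤ : ℕ∞) f → HasCompactSupport f →
      (∀ p, 0 ≤ f p) → Function.support f ⊆ B ×ˢ (Set.univ : Set E3) →
      ∫ x in B, f (x, u x) * (Dmat u x).det ≤ ∫ z, ⨆ x ∈ B, f (x, z)) :
    ∀ᵐ z : E3, Set.Subsingleton {x ∈ B | u x = z} := by
  refine Filter.Eventually.of_forall fun z₀ => ?_
  rintro x₁ ⟨hx₁, hz₁⟩ x₂ ⟨hx₂, hz₂⟩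
  by_contra hne
  obtain ⟨⟨U₁, hU₁, hinj₁⟩, hmap₁⟩ := local_inverse hB hu hx₁ (hdet _ hx₁)
  obtain ⟨⟨U₂, hU₂, hinj₂⟩, hmap₂⟩ := local_inverse hB hu hx₂ (hdet _ hx₂)
  obtain ⟨ε₁, hε₁, hb₁⟩ := Metric.mem_nhds_iff.1 (Filter.inter_mem hU₁ (hB.mem_nhds hx₁))
  obtain ⟨ε₂, hε₂, hb₂⟩ := Metric.mem_nhds_iff.1 (Filter.inter_mem hU₂ (hB.mem_nhds hx₂))
  have hd : 0 < dist x₁ x₂ := dist_pos.2 hne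
  -- The balls of radius `2 * r` have to be disjoint and to lie in the neighbourhoods above.
  obtain ⟨r, hr, hr₁, hr₂, hr₃⟩ : ∃ r : ℝ, 0 < r ∧ 2 * r < ε₁ ∧ 2 * r < ε₂ ∧
      4 * r < dist x₁ x₂ := by
    refine ⟨min (min ε₁ ε₂) (dist x₁ x₂) / 5, by positivity, ?_, ?_, ?_⟩
    all_goals
      have h1 := min_le_left (min ε₁ ε₂) (dist x₁ x₂)
      have h2 := min_le_right (min ε₁ ε₂) (dist x₁ x₂)
      have h3 := min_le_left ε₁ ε₂
      have h4 := min_le_right ε₁ ε₂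
      linarith
  have hS₁ : Metric.closedBall x₁ (2 * r) ⊆ U₁ ∩ B :=
    (Metric.closedBall_subset_ball hr₁).trans hb₁
  have hS₂ : Metric.closedBall x₂ (2 * r) ⊆ U₂ ∩ B :=
    (Metric.closedBall_subset_ball hr₂).trans hb₂
  set K₁ := Metric.closedBall x₁ r with hK₁
  set K₂ := Metric.closedBall x₂ r with hK₂
  have hKS₁ : K₁ ⊆ U₁ ∩ B := (Metric.closedBall_subset_closedBall (by linarith)).trans hS₁
  have hKS₂ : K₂ ⊆ U₂ ∩ B := (Metric.closedBall_subset_closedBall (by linarith)).trans hS₂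
  have hdisj : Disjoint K₁ K₂ := Metric.closedBall_disjoint_closedBall (by linarith)
  have hV₁ : u '' K₁ ∈ nhds z₀ := by
    rw [← hz₁, ← hmap₁]
    exact Filter.image_mem_map (Metric.closedBall_mem_nhds _ hr)
  have hV₂ : u '' K₂ ∈ nhds z₀ := by
    rw [← hz₂, ← hmap₂]
    exact Filter.image_mem_map (Metric.closedBall_mem_nhds _ hr)
  obtain ⟨δ, hδ, hV⟩ := Metric.mem_nhds_iff.1 (Filter.inter_mem hV₁ hV₂)
  let ψ : ContDiffBump z₀ := ⟨δ / 2, δ, by positivity, by linarith⟩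
  let b₁ : ContDiffBump x₁ := ⟨r, 2 * r, hr, by linarith⟩
  let b₂ : ContDiffBump x₂ := ⟨r, 2 * r, hr, by linarith⟩
  have hψV : Function.support ψ ⊆ u '' K₁ ∩ u '' K₂ := by
    rw [ψ.support_eq]; exact hV
  have hψint : Integrable (fun z => ψ z) := ψ.continuous.integrable_of_hasCompactSupport
    ψ.hasCompactSupport
  have hψpos : 0 < ∫ z, ψ z := ψ.integral_pos
  let φ : E3 → ℝ := fun x => b₁ x + b₂ x
  have hφ0 : ∀ x, 0 ≤ φ x := fun x => add_nonneg b₁.nonneg b₂.nonneg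
  have hz₁' : ∀ x, r * 2 ≤ dist x x₁ → b₁ x = 0 := fun x hx =>
    b₁.zero_of_le_dist (by simpa [b₁, mul_comm] using hx)
  have hz₂' : ∀ x, r * 2 ≤ dist x x₂ → b₂ x = 0 := fun x hx =>
    b₂.zero_of_le_dist (by simpa [b₂, mul_comm] using hx)
  -- The supports of `b₁` and `b₂` are disjoint.
  have hcase : ∀ x, b₁ x = 0 ∨ b₂ x = 0 := by
    intro x
    by_contra! h
    have h1 : dist x x₁ < r * 2 := not_le.1 fun hh => h.1 (hz₁' x hh)
    have h2 : dist x x₂ < r * 2 := not_le.1 fun hh => h.2 (hz₂' x hh)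
    have := dist_triangle_left x₁ x₂ x
    linarith
  have hφ1 : ∀ x, φ x ≤ 1 := by
    intro x
    rcases hcase x with h | h
    · simpa [φ, h] using b₂.le_one
    · simpa [φ, h] using b₁.le_one
  have hφK : ∀ x ∈ K₁ ∪ K₂, φ x = 1 := by
    rintro x (hx | hx)
    · have h1 : b₁ x = 1 := b₁.one_of_mem_closedBall hx
      have := hcase x
      simp_all [φ]
    · have h1 : b₂ x = 1 := b₂.one_of_mem_closedBall hx
      have := hcase x
      simp_all [φ]
  set S := Metric.closedBall x₁ (2 * r) ∪ Metric.closedBall x₂ (2 * r) with hS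
  have hSc : IsCompact S := (isCompact_closedBall _ _).union (isCompact_closedBall _ _)
  have hSB : S ⊆ B := Set.union_subset (fun x hx => (hS₁ hx).2) (fun x hx => (hS₂ hx).2)
  have hφS : ∀ x, x ∉ S → φ x = 0 := by
    intro x hx
    simp only [hS, Set.mem_union, Metric.mem_closedBall, not_or, not_le] at hx
    simp only [φ]
    rw [hz₁' x (by linarith), hz₂' x (by linarith), add_zero]
  have hφc : ContDiff ℝ (⊤ : ℕ∞) φ := b₁.contDiff.add b₂.contDiff
  have hineq := hGMS (fun p => φ p.1 * ψ p.2)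
    ((hφc.comp contDiff_fst).mul (ψ.contDiff.comp contDiff_snd))
    (HasCompactSupport.intro (hSc.prod (isCompact_closedBall z₀ δ)) (by
      rintro ⟨x, z⟩ h
      by_cases hx : x ∈ S
      · have hz : z ∉ Metric.closedBall z₀ δ := fun hz => h ⟨hx, hz⟩
        rw [Metric.mem_closedBall, not_le] at hz
        simp [ψ.zero_of_le_dist hz.le]
      · simp [hφS x hx]))
    (fun p => mul_nonneg (hφ0 _) ψ.nonneg)
    (by
      rintro ⟨x, z⟩ h
      refine ⟨hSB (by_contra fun hx => h ?_), trivial⟩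
      simp [hφS x hx])
  simp only at hineq
  have hright : ∫ z, ⨆ x ∈ B, φ x * ψ z ≤ ∫ z, ψ z := by
    refine integral_mono_of_nonneg (Filter.Eventually.of_forall fun z => ?_) hψint
      (Filter.Eventually.of_forall fun z => ?_)
    · exact Real.iSup_nonneg fun x => Real.iSup_nonneg fun _ => mul_nonneg (hφ0 _) ψ.nonneg
    · exact Real.iSup_le (fun x => Real.iSup_le
        (fun _ => mul_le_of_le_one_left ψ.nonneg (hφ1 x)) ψ.nonneg) ψ.nonneg
  have hcont : ContinuousOn (fun x => φ x * ψ (u x) * (Dmat u x).det) B :=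
    (hφc.continuous.continuousOn.mul (ψ.continuous.comp_continuousOn hu.continuousOn)).mul
      (continuousOn_Dmat_det hB hu)
  have hintS : IntegrableOn (fun x => φ x * ψ (u x) * (Dmat u x).det) S :=
    (hcont.mono hSB).integrableOn_compact hSc
  have hint : IntegrableOn (fun x => φ x * ψ (u x) * (Dmat u x).det) B :=
    hintS.of_forall_sdiff_eq_zero hB.measurableSet fun x hx => by simp [hφS x hx.2]
  have hKB : K₁ ∪ K₂ ⊆ B :=
    Set.union_subset (fun x hx => (hKS₁ hx).2) (fun x hx => (hKS₂ hx).2)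
  have hm₁ : MeasurableSet K₁ := Metric.isClosed_closedBall.measurableSet
  have hm₂ : MeasurableSet K₂ := Metric.isClosed_closedBall.measurableSet
  have hI₁ : ∫ x in K₁, φ x * ψ (u x) * (Dmat u x).det = ∫ z, ψ z := by
    rw [← setIntegral_comp_mul_det hm₁ (fun x hx => hdiff x (hKS₁ hx).2)
      (fun x hx => hdet x (hKS₁ hx).2) (hinj₁.mono fun x hx => (hKS₁ hx).1)
      (hψV.trans Set.inter_subset_left)]
    exact setIntegral_congr_fun hm₁ fun x hx => by simp [hφK x (Or.inl hx)]
  have hI₂ : ∫ x in K₂, φ x * ψ (u x) * (Dmat u x).det = ∫ z, ψ z := by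
    rw [← setIntegral_comp_mul_det hm₂ (fun x hx => hdiff x (hKS₂ hx).2)
      (fun x hx => hdet x (hKS₂ hx).2) (hinj₂.mono fun x hx => (hKS₂ hx).1)
      (hψV.trans Set.inter_subset_right)]
    exact setIntegral_congr_fun hm₂ fun x hx => by simp [hφK x (Or.inr hx)]
  have hleft : ∫ x in K₁ ∪ K₂, φ x * ψ (u x) * (Dmat u x).det ≤
      ∫ x in B, φ x * ψ (u x) * (Dmat u x).det := by
    refine setIntegral_mono_set hint ?_ (Filter.Eventually.of_forall hKB)
    filter_upwards [ae_restrict_mem hB.measurableSet] with x hx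
    exact mul_nonneg (mul_nonneg (hφ0 _) ψ.nonneg) (hdet x hx).le
  rw [setIntegral_union hdisj hm₂ (hint.mono_set (Set.subset_union_left.trans hKB))
    (hint.mono_set (Set.subset_union_right.trans hKB)), hI₁, hI₂] at hleft
  linarith
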